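/- Let m and n be positive integers and let x be a complex number with e^{iπn(2x+m)} ≠ 1. Then the Mordell integral Φ(x, m/n) equals [ Σ_{k=1}^{n} e^{iπ(m/n)k² + 2kπix} − √(n/m)·e^{iπ(1/4 − (n/m)x²)}·Σ_{k=1}^{m} e^{−iπ(n/m)k² + 2kπi(n/m)x} ] / ( e^{iπn(2x+m)} − 1 ). -/

import Mathlib

open scoped Real
open MeasureTheory Set Complex Finset

/-- Integral along the straight line `t ↦ c + e^{iθ} t`, `t ∈ ℝ`. -/
noncomputable def lineInt (c θ : ℝ) (f : ℂ → ℂ) : ℂ :=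
  ∫ t : ℝ, f ((c : ℂ) + Complex.exp ((θ : ℂ) * Complex.I) * (t : ℂ)) *
    Complex.exp ((θ : ℂ) * Complex.I)

/-- The Mordell integral `Φ(x, τ)`, the path being the straight line of slope 1
crossing the real axis at `c ∈ (0, 1)`. -/
noncomputable def mordellPhi (x τ : ℂ) (c : ℝ) : ℂ :=
  lineInt c (π/4) (fun u =>
    Complex.exp ((π : ℂ) * Complex.I * τ * u ^ 2 + 2 * (π : ℂ) * Complex.I * x * u) /
      (Complex.exp (2 * (π : ℂ) * Complex.I * u) - 1))


open Filter Topology Asymptotics in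
lemma integrable_of_decay (f : ℝ → ℂ) (hf : Continuous f) (C X : ℝ)
    (hb : ∀ t : ℝ, X ≤ |t| → ‖f t‖ ≤ C * (1 + t ^ 2)⁻¹) : Integrable f := by
  refine hf.locallyIntegrable.integrable_of_isBigO_cocompact (g := fun t : ℝ => (1 + t ^ 2)⁻¹) ?_
    (integrable_inv_one_add_sq.integrableAtFilter _)
  refine IsBigO.of_bound C ?_
  have h : ∀ᶠ t : ℝ in cocompact ℝ, X ≤ |t| := by
    simpa using (tendsto_norm_cocompact_atTop (E := ℝ)).eventually_ge_atTop X
  filter_upwards [h] with t ht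
  rw [Real.norm_of_nonneg (by positivity)]
  exact hb t ht

open Filter Topology Asymptotics in
lemma shift_line (g : ℂ → ℂ) (y₁ y₂ : ℝ) (C X : ℝ)
    (hd : ∀ t y : ℝ, y ∈ Set.uIcc y₁ y₂ → DifferentiableAt ℂ g (t + y * I))
    (hb : ∀ t y : ℝ, y ∈ Set.uIcc y₁ y₂ → X ≤ |t| → ‖g (t + y * I)‖ ≤ C * (1 + t ^ 2)⁻¹) :
    ∫ t : ℝ, g (t + y₁ * I) = ∫ t : ℝ, g (t + y₂ * I) := by
  have hint : ∀ y ∈ Set.uIcc y₁ y₂, Integrable (fun t : ℝ => g (t + y * I)) := by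
    intro y hy
    refine integrable_of_decay _ ?_ C X (fun t ht => hb t y hy ht)
    rw [continuous_iff_continuousAt]
    intro t
    exact ContinuousAt.comp (f := fun t : ℝ => (t + y * I : ℂ)) (hd t y hy).continuousAt
      (by fun_prop)
  have h1 := intervalIntegral_tendsto_integral (hint y₁ Set.left_mem_uIcc) tendsto_neg_atTop_atBot
    tendsto_id
  have h2 := intervalIntegral_tendsto_integral (hint y₂ Set.right_mem_uIcc) tendsto_neg_atTop_atBot
    tendsto_id
  have hB : Tendsto (fun t : ℝ => C * (1 + t ^ 2)⁻¹ * |y₂ - y₁|) atTop (𝓝 0) := by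
    have : Tendsto (fun t : ℝ => (1 + t ^ 2)⁻¹) atTop (𝓝 0) :=
      tendsto_inv_atTop_zero.comp
        (tendsto_atTop_add_const_left _ _ (tendsto_pow_atTop (by norm_num)))
    simpa using (this.const_mul C).mul_const (|y₂ - y₁|)
  have hv : ∀ s : ℝ → ℝ, (∀ t, |s t| = |t|) →
      Tendsto (fun T : ℝ => ∫ y : ℝ in y₁..y₂, g (s T + y * I)) atTop (𝓝 0) := by
    intro s hs
    refine squeeze_zero_norm' ?_ hB
    filter_upwards [eventually_ge_atTop X] with T hT
    refine intervalIntegral.norm_integral_le_of_norm_le_const fun y hy => ?_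
    have := hb (s T) y (uIoc_subset_uIcc hy) (by rw [hs]; exact hT.trans (le_abs_self _))
    rwa [← sq_abs, hs, sq_abs] at this
  have hp := hv id (fun _ => rfl)
  have hn := hv (fun t => -t) (fun t => abs_neg t)
  have hz : ∀ T : ℝ, (∫ x : ℝ in (-T)..T, g (x + y₁ * I)) - (∫ x : ℝ in (-T)..T, g (x + y₂ * I))
      + I * (∫ y : ℝ in y₁..y₂, g (T + y * I)) - I * (∫ y : ℝ in y₁..y₂, g ((-T : ℝ) + y * I))
      = 0 := by
    intro T
    have := integral_boundary_rect_eq_zero_of_differentiableOn g (-T + y₁ * I) (T + y₂ * I) ?_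
    · simpa using this
    · intro z hz
      have := hd z.re z.im (by simpa using hz.2)
      rw [re_add_im] at this
      exact this.differentiableWithinAt
  have := ((h1.sub h2).add (hp.const_mul I)).sub (hn.const_mul I)
  have h0 := tendsto_nhds_unique (this.congr (fun T => hz T)) tendsto_const_nhds
  simp only [mul_zero, add_zero, sub_zero] at h0
  exact sub_eq_zero.mp h0

/-- The direction `e^{iπ/4}`. -/
noncomputable def om : ℂ := Complex.exp (((π / 4 : ℝ) : ℂ) * Complex.I)

lemma om_eq : om = ((√2 / 2 : ℝ) : ℂ) * (1 + I) := by
  unfold om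
  rw [exp_mul_I, ← ofReal_cos, ← ofReal_sin, Real.cos_pi_div_four, Real.sin_pi_div_four]
  ring

lemma sq2 : ((√2 : ℝ) : ℂ) ^ 2 = 2 := by
  rw [← ofReal_pow, Real.sq_sqrt (by norm_num)]; norm_num

lemma om_sq : om ^ 2 = I := by
  rw [om_eq]
  push_cast
  linear_combination (1 + I) ^ 2 / 4 * sq2 + 1 / 2 * I_sq

lemma om_ne : om ≠ 0 := Complex.exp_ne_zero _

lemma norm_om : ‖om‖ = 1 := norm_exp_ofReal_mul_I _

/-- The Gaussian. -/
noncomputable def gs (a : ℝ) (b d u : ℂ) : ℂ :=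
  Complex.exp ((π : ℂ) * I * a * u ^ 2 + b * u + d)

/-- The denominator. -/
noncomputable def dn (u : ℂ) : ℂ := Complex.exp (2 * (π : ℂ) * I * u) - 1

/-- Rotated line integral -/
noncomputable def J (y : ℝ) (F : ℂ → ℂ) : ℂ := ∫ t : ℝ, F (om * (t + y * I))

lemma om_shift (t s y : ℝ) : om * (t + y * I) + s =
    om * (((t + s * (√2 / 2) : ℝ) : ℂ) + ((y - s * (√2 / 2) : ℝ) : ℂ) * I) := by
  rw [om_eq]; push_cast
  linear_combination (-s / 2 : ℂ) * sq2 + ((√2 : ℝ) : ℂ) ^ 2 * s / 4 * I_sq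

lemma J_shift (y s : ℝ) (F : ℂ → ℂ) :
    J (y - s * (√2 / 2)) F = J y (fun u => F (u + s)) := by
  unfold J
  simp_rw [om_shift]
  exact (integral_add_right_eq_self
    (fun t : ℝ => F (om * ((t : ℂ) + ((y - s * (√2 / 2) : ℝ) : ℂ) * I))) (s * (√2 / 2))).symm

lemma lineInt_eq (c : ℝ) (f : ℂ → ℂ) :
    lineInt c (π / 4) f = om * J (-(c * (√2 / 2))) f := by
  have := J_shift 0 c f
  rw [zero_sub] at this
  rw [this]
  unfold lineInt J
  rw [integral_mul_const, mul_comm]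
  congr 1
  refine integral_congr_ae (Filter.Eventually.of_forall fun t => ?_)
  simp only [ofReal_zero, zero_mul, add_zero]
  rw [add_comm]; rfl

lemma om_coord (t y : ℝ) : (om * (t + y * I)) =
    ((√2 / 2 * (t - y) : ℝ) : ℂ) + ((√2 / 2 * (t + y) : ℝ) : ℂ) * I := by
  rw [om_eq]; push_cast
  linear_combination ((√2 : ℝ) : ℂ) * y / 2 * I_sq

lemma gs_bound (a : ℝ) (ha : 0 < a) (b d : ℂ) (Y : ℝ) :
    ∃ C : ℝ, 0 ≤ C ∧ ∀ t y : ℝ, |y| ≤ Y →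
      ‖gs a b d (om * (t + y * I))‖ ≤ C * (1 + t ^ 2)⁻¹ := by
  set α := π * a with hα
  have hα0 : 0 < α := by positivity
  set B := ‖b‖ with hB
  set L := α * Y ^ 2 + B * Y + ‖d‖ + B ^ 2 / (2 * α) with hL
  set μ := min 1 (α / 2) with hμ
  have hμ0 : 0 < μ := by positivity
  refine ⟨Real.exp L / μ, by positivity, fun t y hy => ?_⟩
  have e1 : (π : ℂ) * I * a * (om * (t + y * I)) ^ 2 =
      ((-α * (t ^ 2 - y ^ 2) : ℝ) : ℂ) + ((-2 * α * t * y : ℝ) : ℂ) * I := by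
    rw [mul_pow, om_sq, hα]; push_cast
    linear_combination ((π : ℂ) * a * (t + y * I) ^ 2 - π * a * y ^ 2) * I_sq
  have e2 : ‖gs a b d (om * (t + y * I))‖ ≤ Real.exp (L - α / 2 * t ^ 2) := by
    unfold gs
    rw [norm_exp, e1]
    apply Real.exp_le_exp.mpr
    have h1 : (b * (om * (t + y * I))).re ≤ B * (|t| + |y|) := by
      refine (re_le_norm _).trans ?_
      rw [norm_mul, norm_mul, norm_om, one_mul]
      gcongr
      refine (norm_add_le _ _).trans ?_
      simp
    have h2 : d.re ≤ ‖d‖ := re_le_norm _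
    have h3 : B * |t| ≤ α / 2 * t ^ 2 + B ^ 2 / (2 * α) := by
      have : α / 2 * t ^ 2 + B ^ 2 / (2 * α) - B * |t| = (α * |t| - B) ^ 2 / (2 * α) := by
        rw [← sq_abs t]; field_simp; ring
      have : 0 ≤ (α * |t| - B) ^ 2 / (2 * α) := by positivity
      linarith
    have h4 : y ^ 2 ≤ Y ^ 2 := by rw [← sq_abs y]; gcongr
    have h5 : B * |y| ≤ B * Y := by gcongr
    have h6 : α * y ^ 2 ≤ α * Y ^ 2 := by gcongr
    have h7 : (((-α * (t ^ 2 - y ^ 2) : ℝ) : ℂ) + ((-2 * α * t * y : ℝ) : ℂ) * I).re =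
        -α * (t ^ 2 - y ^ 2) := by
      rw [add_re, ofReal_re, re_ofReal_mul, I_re, mul_zero, add_zero]
    rw [add_re, add_re, h7]
    linarith
  refine e2.trans ?_
  rw [Real.exp_sub, ← div_eq_mul_inv, div_div]
  apply div_le_div_of_nonneg_left (by positivity) (by positivity)
  have h1 := Real.add_one_le_exp (α / 2 * t ^ 2)
  have h2 : μ ≤ 1 := min_le_left _ _
  have h3 : μ * t ^ 2 ≤ α / 2 * t ^ 2 := by gcongr; exact min_le_right _ _
  linarith

lemma dn_bound (t y Y : ℝ) (hy : |y| ≤ Y) (ht : Y + 1 ≤ |t|) :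
    1 / 2 ≤ ‖dn (om * (t + y * I))‖ := by
  have hn : ‖Complex.exp (2 * (π : ℂ) * I * (om * (t + y * I)))‖ =
      Real.exp (-(2 * π * (√2 / 2 * (t + y)))) := by
    rw [norm_exp, om_coord]
    congr 1
    simp
  have hs : 1 ≤ √2 := by rw [Real.one_le_sqrt]; norm_num
  have hpi := Real.pi_gt_three
  have hy' := abs_le.mp hy
  have hk : 3 ≤ π * √2 := by nlinarith
  unfold dn
  rcases le_abs.mp ht with h | h
  · have h1 : 1 ≤ t + y := by linarith
    have h2 : Real.exp (-(2 * π * (√2 / 2 * (t + y)))) ≤ 1 / 2 := by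
      rw [Real.exp_neg, ← one_div]
      apply one_div_le_one_div_of_le (by norm_num)
      have := Real.add_one_le_exp (2 * π * (√2 / 2 * (t + y)))
      nlinarith
    have := norm_sub_norm_le (1 : ℂ) (Complex.exp (2 * (π : ℂ) * I * (om * (t + y * I))))
    rw [hn, norm_one, norm_sub_rev] at this
    linarith
  · have h1 : t + y ≤ -1 := by linarith
    have h2 : 2 ≤ Real.exp (-(2 * π * (√2 / 2 * (t + y)))) := by
      have := Real.add_one_le_exp (-(2 * π * (√2 / 2 * (t + y))))
      nlinarith
    have := norm_sub_norm_le (Complex.exp (2 * (π : ℂ) * I * (om * (t + y * I)))) 1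
    rw [hn, norm_one] at this
    linarith

lemma dn_zero (u : ℂ) (h : dn u = 0) : ∃ k : ℤ, u = k := by
  unfold dn at h
  rw [sub_eq_zero, Complex.exp_eq_one_iff] at h
  obtain ⟨k, hk⟩ := h
  refine ⟨k, ?_⟩
  have : (2 * (π : ℂ) * I) ≠ 0 := by simp [Real.pi_ne_zero]
  apply mul_left_cancel₀ this
  rw [hk]; ring

/-- On the strip, the denominator vanishes at most at `1`. -/
lemma dn_strip (c t y : ℝ) (hc : 0 < c) (hc' : c < 1) (h1 : -((c + 1) * (√2 / 2)) ≤ y)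
    (h2 : y ≤ -(c * (√2 / 2))) (h : dn (om * (t + y * I)) = 0) : om * (t + y * I) = 1 := by
  obtain ⟨k, hk⟩ := dn_zero _ h
  rw [om_coord] at hk
  have hre := congrArg re hk
  have him := congrArg im hk
  simp at hre him
  have hty : t = -y := by linarith
  have hs : (√2) ^ 2 = 2 := Real.sq_sqrt (by norm_num)
  have hs0 : 0 < √2 := by positivity
  have e : (k : ℝ) = -(√2 * y) := by rw [← hre, hty]; ring
  have hk1 : k = 1 := by
    have a1 : (0 : ℝ) < k := by rw [e]; nlinarith
    have a2 : (k : ℝ) < 2 := by rw [e]; nlinarith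
    have a1' : 0 < k := by exact_mod_cast a1
    have a2' : k < 2 := by exact_mod_cast a2
    omega
  rw [om_coord, hk, hk1]; simp

lemma dn_line (c t : ℝ) (hc : 0 < c) (hc' : c < 1) :
    dn (om * (t + (-(c * (√2 / 2)) : ℝ) * I)) ≠ 0 := by
  intro h
  have hs0 : 0 < √2 := by positivity
  have h1 := dn_strip c t _ hc hc' (by nlinarith) le_rfl h
  rw [om_coord] at h1
  have hre := congrArg re h1
  have him := congrArg im h1
  simp at hre him
  have hty : t = c * (√2 / 2) := by linarith
  have hs : (√2) ^ 2 = 2 := Real.sq_sqrt (by norm_num)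
  rw [hty] at hre
  nlinarith

lemma gs_diff (a : ℝ) (b d : ℂ) : Differentiable ℂ (gs a b d) := by
  unfold gs; fun_prop

lemma dn_diff : Differentiable ℂ dn := by
  unfold dn; fun_prop

lemma gs_div_integrable (a : ℝ) (ha : 0 < a) (b d : ℂ) (c : ℝ) (hc : 0 < c) (hc' : c < 1) :
    Integrable (fun t : ℝ => gs a b d (om * (t + (-(c * (√2 / 2)) : ℝ) * I)) /
      dn (om * (t + (-(c * (√2 / 2)) : ℝ) * I))) := by
  obtain ⟨C, hC, hb⟩ := gs_bound a ha b d |-(c * (√2 / 2))|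
  refine integrable_of_decay _ ?_ (2 * C) (|-(c * (√2 / 2))| + 1) fun t ht => ?_
  · refine Continuous.div ?_ ?_ (fun t => dn_line c t hc hc')
    · exact (gs_diff a b d).continuous.comp (by fun_prop)
    · exact dn_diff.continuous.comp (by fun_prop)
  · have h1 := hb t _ le_rfl
    have h2 := dn_bound t _ _ le_rfl ht
    rw [norm_div, div_le_iff₀ (by linarith)]
    have : 0 ≤ C * (1 + t ^ 2)⁻¹ := by positivity
    nlinarith

lemma gs_form (a : ℝ) (b d : ℂ) (t y : ℝ) : gs a b d (om * (t + y * I)) =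
    Complex.exp (((-(π * a) : ℝ) : ℂ) * t ^ 2 + (b * om - 2 * π * a * y * I) * t +
      (π * a * y ^ 2 + b * om * y * I + d)) := by
  unfold gs
  congr 1
  rw [mul_pow, om_sq]; push_cast
  linear_combination (π * a * (t + y * I) ^ 2 - π * a * y ^ 2: ℂ) * I_sq

lemma gs_integrable (a : ℝ) (ha : 0 < a) (b d : ℂ) (y : ℝ) :
    Integrable (fun t : ℝ => gs a b d (om * (t + y * I))) := by
  simp_rw [gs_form]
  apply integrable_cexp_quadratic'
  rw [ofReal_re]
  have : 0 < π * a := by positivity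
  linarith

lemma gs_J (a : ℝ) (ha : 0 < a) (b d : ℂ) (y : ℝ) :
    J y (gs a b d) = (√(1 / a) : ℂ) * Complex.exp (d + b ^ 2 * I / (4 * π * a)) := by
  unfold J
  simp_rw [gs_form]
  have hpa : 0 < π * a := by positivity
  rw [integral_cexp_quadratic (by rw [ofReal_re]; linarith)]
  have hp : (π : ℂ) ≠ 0 := by simp [Real.pi_ne_zero]
  have ha' : (a : ℂ) ≠ 0 := by simp [ha.ne']
  congr 1
  · rw [Real.sqrt_eq_rpow, Complex.ofReal_cpow (by positivity)]
    push_cast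
    congr 1
    field_simp
  · congr 1
    push_cast
    field_simp
    linear_combination b ^ 2 * om_sq + 4 * π ^ 2 * a ^ 2 * y ^ 2 * I_sq

lemma dn_one : dn 1 = 0 := by
  unfold dn; rw [mul_one, exp_two_pi_mul_I, sub_self]

lemma dslope_ne (f : ℂ → ℂ) (hf : f 1 = 0) (u : ℂ) (hu : u ≠ 1) :
    dslope f 1 u = f u / (u - 1) := by
  rw [dslope_of_ne _ hu, slope_def_field, hf, sub_zero]

lemma ref_one : gs 1 (-(π * I)) 0 1 = 1 := by
  unfold gs
  rw [show (π : ℂ) * I * (1 : ℝ) * 1 ^ 2 + -(π * I) * 1 + 0 = 0 by push_cast; ring,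
    Complex.exp_zero]

lemma ref_add (u : ℂ) : gs 1 (-(π * I)) 0 (u + 1) =
    gs 1 (-(π * I)) 0 u * (dn u + 1) := by
  unfold gs dn
  rw [sub_add_cancel, ← Complex.exp_add]; congr 1; push_cast; ring

lemma gs_add (a : ℝ) (b d u : ℂ) : gs a b d (u + 1) =
    gs a (b + 2 * π * I * a) (d + π * I * a + b) u := by
  unfold gs; congr 1; ring

lemma dslope_dn_one : dslope dn 1 1 ≠ 0 := by
  have : HasDerivAt dn (Complex.exp (2 * (π : ℂ) * I * 1) * (2 * (π : ℂ) * I * 1)) 1 := by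
    unfold dn
    exact (((hasDerivAt_id (1 : ℂ)).const_mul (2 * (π : ℂ) * I)).cexp).sub_const 1
  rw [dslope_same, this.deriv, mul_one, exp_two_pi_mul_I]
  simp [Real.pi_ne_zero]

lemma step (a : ℝ) (ha : 0 < a) (b d : ℂ) (c : ℝ) (hc : 0 < c) (hc' : c < 1) :
    om * J (-(c * (√2 / 2))) (fun u => (gs a b d (u + 1) - gs a b d u) / dn u) =
      gs a b d 1 := by
  set K := gs a b d 1 with hK
  set N : ℂ → ℂ := fun u => gs a b d u - K * gs 1 (-(π * I)) 0 u with hN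
  have hN1 : N 1 = 0 := by simp only [hN, ref_one, ← hK]; ring
  have hNd : Differentiable ℂ N := (gs_diff a b d).sub ((gs_diff _ _ _).const_mul K)
  set E : ℂ → ℂ := fun u => dslope N 1 u / dslope dn 1 u with hE
  have hEq : ∀ u, u ≠ 1 → E u = N u / dn u := by
    intro u hu
    simp only [hE]
    rw [dslope_ne N hN1 u hu, dslope_ne dn dn_one u hu]
    exact div_div_div_cancel_right₀ (sub_ne_zero.mpr hu) _ _
  have hds : ∀ f : ℂ → ℂ, Differentiable ℂ f → Differentiable ℂ (dslope f 1) := by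
    intro f hf
    rw [← differentiableOn_univ] at hf ⊢
    exact (differentiableOn_dslope Filter.univ_mem).mpr hf
  set y₁ := -(c * (√2 / 2)) with hy1
  set y₂ := y₁ - 1 * (√2 / 2) with hy2
  have hs0 : 0 < √2 := by positivity
  have hle : y₂ ≤ y₁ := by rw [hy2]; linarith
  have hy2' : y₂ = -((c + 1) * (√2 / 2)) := by rw [hy2, hy1]; ring
  have hmem : ∀ y, y ∈ Set.uIcc y₁ y₂ → y₂ ≤ y ∧ y ≤ y₁ := by
    intro y hy
    rw [Set.uIcc_of_ge hle] at hy
    exact hy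
  have hy1neg : y₁ ≤ 0 := by
    have : 0 ≤ c * (√2 / 2) := by positivity
    linarith
  obtain ⟨C₁, hC₁, hb₁⟩ := gs_bound a ha b d |y₂|
  obtain ⟨C₂, hC₂, hb₂⟩ := gs_bound 1 one_pos (-(π * I)) 0 |y₂|
  have key := shift_line (fun w => E (om * w)) y₁ y₂ (2 * (C₁ + ‖K‖ * C₂)) (|y₂| + 1) ?_ ?_
  · have h1 : J y₁ E = J y₂ E := key
    have hJ1 : ∀ t : ℝ, om * (t + y₁ * I) ≠ 1 := by
      intro t h
      apply dn_line c t hc hc'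
      rw [h, dn_one]
    rw [hy2, J_shift] at h1
    have h2 : J y₁ E = ∫ t : ℝ, N (om * (t + y₁ * I)) / dn (om * (t + y₁ * I)) := by
      unfold J; congr 1; ext t; exact hEq _ (hJ1 t)
    have hdn1 : ∀ u, dn (u + 1) = dn u := by
      intro u; unfold dn
      rw [mul_add, Complex.exp_add, mul_one, exp_two_pi_mul_I, mul_one]
    have h3 : J y₁ (fun u => E (u + (1 : ℝ))) =
        ∫ t : ℝ, N (om * (t + y₁ * I) + 1) / dn (om * (t + y₁ * I)) := by
      unfold J; congr 1; ext t
      rw [ofReal_one]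
      show E (om * (t + y₁ * I) + 1) = _
      rw [hEq, hdn1]
      intro h
      apply dn_line c t hc hc'
      rw [← hdn1, h, dn_one]
    rw [h2, h3] at h1
    have i1 := gs_div_integrable a ha b d c hc hc'
    have i2 := gs_div_integrable a ha (b + 2 * π * I * a) (d + π * I * a + b) c hc hc'
    have i3 := (gs_integrable 1 one_pos (-(π * I)) 0 y₁).const_mul K
    have i4 := gs_div_integrable 1 one_pos (-(π * I)) 0 c hc hc'
    rw [← hy1] at i1 i2 i4
    have j1 : Integrable (fun t : ℝ => N (om * (t + y₁ * I)) / dn (om * (t + y₁ * I))) := by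
      refine (i1.sub (i4.const_mul K)).congr (Filter.Eventually.of_forall fun t => ?_)
      simp only [hN, Pi.sub_apply]
      ring
    have e : ∀ t : ℝ, N (om * (t + y₁ * I) + 1) / dn (om * (t + y₁ * I)) =
        ((gs a b d (om * (t + y₁ * I) + 1) - gs a b d (om * (t + y₁ * I))) /
          dn (om * (t + y₁ * I))) + N (om * (t + y₁ * I)) / dn (om * (t + y₁ * I)) -
          K * gs 1 (-(π * I)) 0 (om * (t + y₁ * I)) := by
      intro t
      have := dn_line c t hc hc'
      rw [← hy1] at this
      simp only [hN, ref_add]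
      field_simp
      ring
    have j2 : Integrable (fun t : ℝ => (gs a b d (om * (t + y₁ * I) + 1) -
        gs a b d (om * (t + y₁ * I))) / dn (om * (t + y₁ * I))) := by
      refine (i2.sub i1).congr (Filter.Eventually.of_forall fun t => ?_)
      simp only [Pi.sub_apply, gs_add]
      ring
    simp_rw [e] at h1
    have j3 := j2.add j1
    simp only [Pi.add_def] at j3
    rw [integral_sub j3 i3, integral_add j2 j1, integral_const_mul] at h1
    have hg := gs_J 1 one_pos (-(π * I)) 0 y₁
    unfold J at hg ⊢
    rw [hg] at h1
    have h5 : om * ((√(1 / 1) : ℂ) *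
        Complex.exp (0 + (-(π * I)) ^ 2 * I / (4 * π * (1 : ℝ)))) = 1 := by
      have hp : (π : ℂ) ≠ 0 := by simp [Real.pi_ne_zero]
      unfold om
      simp only [div_one, Real.sqrt_one, ofReal_one, one_mul]
      rw [← Complex.exp_add, Complex.exp_eq_one_iff]
      refine ⟨0, ?_⟩
      push_cast
      field_simp
      linear_combination π * I * I_sq
    linear_combination (-om) * h1 + K * h5
  · intro t y hy
    obtain ⟨ya, yb⟩ := hmem y hy
    have hne : dslope dn 1 (om * (t + y * I)) ≠ 0 := by
      by_cases h : om * (t + y * I) = 1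
      · rw [h]; exact dslope_dn_one
      · rw [dslope_ne dn dn_one _ h]
        refine div_ne_zero (fun h' => h ?_) (sub_ne_zero.mpr h)
        exact dn_strip c t y hc hc' (hy2' ▸ ya) yb h'
    have : DifferentiableAt ℂ E (om * (t + y * I)) :=
      (hds N hNd _).div (hds dn dn_diff _) hne
    exact DifferentiableAt.comp (f := fun w : ℂ => om * w) (t + y * I : ℂ) this (by fun_prop)
  · intro t y hy ht
    obtain ⟨ya, yb⟩ := hmem y hy
    have hyy : |y| ≤ |y₂| := by
      rw [abs_of_nonpos (yb.trans hy1neg), abs_of_nonpos (hle.trans hy1neg)]; linarith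
    have h1 := hb₁ t y hyy
    have h2 := hb₂ t y hyy
    have h3 := dn_bound t y _ hyy ht
    have hne : om * (t + y * I) ≠ 1 := by
      intro h
      rw [h, dn_one, norm_zero] at h3
      linarith
    show ‖E (om * (t + y * I))‖ ≤ _
    rw [hEq _ hne, norm_div, div_le_iff₀ (by linarith)]
    have h4 : ‖N (om * (t + y * I))‖ ≤ (C₁ + ‖K‖ * C₂) * (1 + t ^ 2)⁻¹ := by
      refine (norm_sub_le _ _).trans ?_
      rw [norm_mul, add_mul, mul_assoc]
      gcongr
    have h5 : 0 ≤ (C₁ + ‖K‖ * C₂) * (1 + t ^ 2)⁻¹ := by positivity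
    nlinarith

/-- Evaluation of the Mordell integral `Φ(x, m/n)` at a positive rational `τ = m/n`
in terms of exponential sums. -/
theorem mordellPhi_rat (m n : ℕ) (hm : 0 < m) (hn : 0 < n) (x : ℂ)
    (hx : Complex.exp ((π : ℂ) * Complex.I * n * (2 * x + m)) ≠ 1)
    (c : ℝ) (hc : 0 < c) (hc' : c < 1) :
    mordellPhi x ((m : ℂ) / (n : ℂ)) c =
      ((∑ k ∈ Finset.Icc 1 n,
          Complex.exp ((π : ℂ) * Complex.I * ((m : ℂ) / n) * (k : ℂ) ^ 2 +
            2 * (k : ℂ) * (π : ℂ) * Complex.I * x)) -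
        (Real.sqrt ((n : ℝ) / (m : ℝ)) : ℂ) *
          Complex.exp ((π : ℂ) * Complex.I * (1 / 4 - ((n : ℂ) / m) * x ^ 2)) *
          ∑ k ∈ Finset.Icc 1 m,
            Complex.exp (-((π : ℂ) * Complex.I * ((n : ℂ) / m) * (k : ℂ) ^ 2) +
              2 * (k : ℂ) * (π : ℂ) * Complex.I * ((n : ℂ) / m) * x)) /
      (Complex.exp ((π : ℂ) * Complex.I * n * (2 * x + m)) - 1) := by
  set a : ℝ := (m : ℝ) / n with ha
  have hm' : (m : ℂ) ≠ 0 := by exact_mod_cast hm.ne'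
  have hn' : (n : ℂ) ≠ 0 := by exact_mod_cast hn.ne'
  have ha0 : 0 < a := by positivity
  have haC : (a : ℂ) = (m : ℂ) / n := by rw [ha]; push_cast; rfl
  have hp : (π : ℂ) ≠ 0 := by simp [Real.pi_ne_zero]
  set q := Complex.exp ((π : ℂ) * Complex.I * n * (2 * x + m)) with hq
  set y := -(c * (√2 / 2)) with hy
  set H : ℕ → ℂ → ℂ := fun k u =>
    gs a (2 * π * I * x + 2 * π * I * a * k) (π * I * a * k ^ 2 + 2 * π * I * x * k) u with hH
  have hHs : ∀ k u, H k (u + 1) = H (k + 1) u := by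
    intro k u
    simp only [hH, gs]
    congr 1; push_cast; ring
  have hHint : ∀ k, Integrable (fun t : ℝ => H k (om * (t + y * I)) / dn (om * (t + y * I))) :=
    fun k => gs_div_integrable a ha0 _ _ c hc hc'
  have hstep : ∀ k : ℕ, om * J y (H (k + 1) / dn) - om * J y (H k / dn) = H k 1 := by
    intro k
    have h := step a ha0 (2 * π * I * x + 2 * π * I * a * k)
      (π * I * a * k ^ 2 + 2 * π * I * x * k) c hc hc'
    have e : J y (fun u => (H k (u + 1) - H k u) / dn u) = J y (H (k + 1) / dn) - J y (H k / dn) := by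
      unfold J
      simp only [Pi.div_apply]
      rw [← integral_sub (hHint _) (hHint _)]
      congr 1; ext t; rw [hHs, sub_div]
    rw [← mul_sub, ← e]
    exact h
  have htel : ∑ k ∈ Finset.range n, H k 1 = om * J y (H n / dn) - om * J y (H 0 / dn) := by
    rw [← Finset.sum_range_sub (fun k => om * J y (H k / dn))]
    exact Finset.sum_congr rfl fun k _ => (hstep k).symm
  have hphi : mordellPhi x ((m : ℂ) / n) c = om * J y (H 0 / dn) := by
    unfold mordellPhi
    rw [lineInt_eq, ← haC]
    congr 2
    ext u
    simp only [hH, Pi.div_apply, gs, dn]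
    congr 2; push_cast; ring
  have hper : ∀ u, dn u ≠ 0 → H n u / dn u = q * (H 0 u / dn u) +
      q * ∑ k ∈ Finset.range m, gs a (2 * π * I * (x + k)) 0 u := by
    intro u hu
    have e1 : H n u = q * H 0 u * Complex.exp (2 * π * I * u) ^ m := by
      simp only [hH, hq, gs]
      rw [← Complex.exp_nat_mul, ← Complex.exp_add, ← Complex.exp_add, haC]
      congr 1
      push_cast
      field_simp
      ring
    have e2 : ∀ k : ℕ, gs a (2 * π * I * (x + k)) 0 u = H 0 u * Complex.exp (2 * π * I * u) ^ k := by
      intro k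
      simp only [hH, gs]
      rw [← Complex.exp_nat_mul, ← Complex.exp_add]
      congr 1
      push_cast
      ring
    simp_rw [e2]
    rw [← Finset.mul_sum, e1]
    have e3 := mul_geom_sum (Complex.exp (2 * π * I * u)) m
    change dn u * _ = _ at e3
    field_simp
    linear_combination (-q * H 0 u) * e3
  have hJn : J y (H n / dn) = q * J y (H 0 / dn) +
      q * ∑ k ∈ Finset.range m, J y (gs a (2 * π * I * (x + k)) 0) := by
    have hgi : ∀ k ∈ Finset.range m, Integrable (fun t : ℝ =>
        gs a (2 * π * I * (x + k)) 0 (om * (t + y * I))) := fun k _ => gs_integrable a ha0 _ _ y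
    unfold J
    simp only [Pi.div_apply]
    rw [← integral_finsetSum _ hgi, ← integral_const_mul, ← integral_const_mul,
      ← integral_add ((hHint 0).const_mul q) ((integrable_finsetSum _ hgi).const_mul q)]
    congr 1; ext t
    exact hper _ (dn_line c t hc hc')
  have hS1 : ∑ k ∈ Finset.Icc 1 n, Complex.exp ((π : ℂ) * Complex.I * ((m : ℂ) / n) * (k : ℂ) ^ 2 +
      2 * (k : ℂ) * (π : ℂ) * Complex.I * x) = ∑ k ∈ Finset.range n, H k 1 := by
    rw [← Finset.Ico_add_one_right_eq_Icc, Finset.sum_Ico_eq_sum_range]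
    refine Finset.sum_congr (by simp) fun k _ => ?_
    simp only [hH, gs, ← haC]
    congr 1; push_cast; ring
  have hsqrt : √(1 / a) = √((n : ℝ) / m) := by rw [ha, one_div_div]
  have hS2 : (Real.sqrt ((n : ℝ) / (m : ℝ)) : ℂ) *
          Complex.exp ((π : ℂ) * Complex.I * (1 / 4 - ((n : ℂ) / m) * x ^ 2)) *
          ∑ k ∈ Finset.Icc 1 m,
            Complex.exp (-((π : ℂ) * Complex.I * ((n : ℂ) / m) * (k : ℂ) ^ 2) +
              2 * (k : ℂ) * (π : ℂ) * Complex.I * ((n : ℂ) / m) * x) =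
      om * (q * ∑ k ∈ Finset.range m, J y (gs a (2 * π * I * (x + k)) 0)) := by
    rw [← Finset.Ico_add_one_right_eq_Icc, Finset.sum_Ico_eq_sum_range, Nat.add_sub_cancel,
      ← Finset.sum_range_reflect, Finset.mul_sum, Finset.mul_sum, Finset.mul_sum]
    refine Finset.sum_congr rfl fun k hk => ?_
    have hk' : k + 1 ≤ m := Finset.mem_range.mp hk
    rw [gs_J a ha0, hsqrt]
    have hc1 : ((1 + (m - 1 - k) : ℕ) : ℂ) = m - k := by
      have : 1 + (m - 1 - k) = m - k := by omega
      rw [this, Nat.cast_sub (by omega)]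
    rw [hc1]
    have hexp : Complex.exp ((π : ℂ) * Complex.I * (1 / 4 - ((n : ℂ) / m) * x ^ 2)) *
        Complex.exp (-((π : ℂ) * Complex.I * ((n : ℂ) / m) * ((m : ℂ) - k) ^ 2) +
              2 * ((m : ℂ) - k) * (π : ℂ) * Complex.I * ((n : ℂ) / m) * x) =
        om * q * Complex.exp (0 + (2 * π * I * (x + k)) ^ 2 * I / (4 * π * a)) := by
      rw [hq, om, ← Complex.exp_add, ← Complex.exp_add, ← Complex.exp_add,
        Complex.exp_eq_exp_iff_exists_int]
      refine ⟨-((n : ℤ) * (m - k)), ?_⟩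
      rw [haC]
      push_cast
      field_simp
      ring_nf
      simp only [I_pow_three]
      ring
    linear_combination (√((n : ℝ) / m) : ℂ) * hexp
  rw [eq_div_iff (sub_ne_zero.mpr hx), hS1, hS2, htel, hJn, hphi]
  ring
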